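/- Consider the Unq example: Y is uniformly distributed on Fin 2 × Fin 2, X₁ = f₁(Y) is the first coordinate of Y, and X₂ = f₂(Y) is the second coordinate of Y. For any random variable Q on a finite type jointly distributed with Y (via a joint pmf p on Q × (Fin 2 × Fin 2) whose marginal on Fin 2 × Fin 2 is uniform), if I(Q:Y|X₁) = 0 and I(Q:Y|X₂) = 0, then I(Q:Y) = 0. (Hence I_α(X₁, X₂ : Y) = 0 for the Unq example, matching the desired redundancy of zero.) -/

import Mathlib

open Real Finset

/- STATEMENT 15: The Unq example.  `Y` is uniform on `Fin 2 × Fin 2`, `X₁ = f₁(Y)` is the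
first coordinate of `Y` and `X₂ = f₂(Y)` the second.  For any `Q` jointly distributed
with `Y` (with uniform `Y`-marginal), if `I(Q:Y|X₁) = 0` and `I(Q:Y|X₂) = 0` then
`I(Q:Y) = 0`.  Hence `I_α(X₁, X₂ : Y) = 0` for Unq. -/

section Defs

variable {Q Y X : Type*} [Fintype Q] [Fintype Y] [Fintype X] [DecidableEq X]

/-- Induced joint pmf of `(Q, X, Y)` where `X = f(Y)`. -/
noncomputable def ind (p : Q × Y → ℝ) (f : Y → X) : Q × X × Y → ℝ :=
  fun a => if a.2.1 = f a.2.2 then p (a.1, a.2.2) else 0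

/-- Marginal of `X` under the induced pmf. -/
noncomputable def indX (p : Q × Y → ℝ) (f : Y → X) (x : X) : ℝ :=
  ∑ q, ∑ y, ind p f (q, x, y)

/-- Marginal of `(Q, X)` under the induced pmf. -/
noncomputable def indQX (p : Q × Y → ℝ) (f : Y → X) (q : Q) (x : X) : ℝ :=
  ∑ y, ind p f (q, x, y)

/-- Marginal of `(X, Y)` under the induced pmf. -/
noncomputable def indXY (p : Q × Y → ℝ) (f : Y → X) (x : X) (y : Y) : ℝ :=
  ∑ q, ind p f (q, x, y)

/-- Marginal of `Y`. -/
noncomputable def margY (p : Q × Y → ℝ) (y : Y) : ℝ :=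
  ∑ q, p (q, y)

/-- Marginal of `Q`. -/
noncomputable def margQ (p : Q × Y → ℝ) (q : Q) : ℝ :=
  ∑ y, p (q, y)

/-- Conditional mutual information `I(Q:Y|X)` for `X = f(Y)`. -/
noncomputable def condMI (p : Q × Y → ℝ) (f : Y → X) : ℝ :=
  ∑ q, ∑ x, ∑ y,
    ind p f (q, x, y) *
      logb 2 (ind p f (q, x, y) * indX p f x / (indQX p f q x * indXY p f x y))

/-- Mutual information `I(Q:Y)`. -/
noncomputable def miQY (p : Q × Y → ℝ) : ℝ :=
  ∑ q, ∑ y, p (q, y) * logb 2 (p (q, y) / (margQ p q * margY p y))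

end Defs

/-!
`I(Q:Y|X)` is the relative entropy of `p` with respect to the joint pmf that makes `Q`, `X = f(Y)`,
`Y` a Markov chain. By the equality case of Gibbs' inequality it therefore vanishes only if the
conditional law of `Q` given `Y = y` depends on `y` through `f y` alone. If this law is a function
of `f y` and also of `g y`, it is constant along every chain of points each of which shares its
`f`-value or its `g`-value with the next. For the two coordinates of a product such chains reach
every point, so `Q` and `Y` are independent.
-/

section Gibbs

variable {ι : Type*}

lemma mul_klFun_div {a b : ℝ} (hab : b = 0 → a = 0) :
    b * InformationTheory.klFun (a / b) = a * log (a / b) + b - a := by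
  rcases eq_or_ne b 0 with rfl | hb
  · simp [hab rfl]
  · rw [InformationTheory.klFun_apply]
    field_simp

theorem eq_of_sum_mul_log_div_nonpos {s : Finset ι} {a b : ι → ℝ}
    (ha : ∀ i ∈ s, 0 ≤ a i) (hb : ∀ i ∈ s, 0 ≤ b i) (hab : ∀ i ∈ s, b i = 0 → a i = 0)
    (hsum : ∑ i ∈ s, b i ≤ ∑ i ∈ s, a i) (hlog : ∑ i ∈ s, a i * log (a i / b i) ≤ 0) :
    ∀ i ∈ s, a i = b i := by
  have hterm : ∀ i ∈ s, 0 ≤ b i * InformationTheory.klFun (a i / b i) := fun i hi =>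
    mul_nonneg (hb i hi) (InformationTheory.klFun_nonneg (div_nonneg (ha i hi) (hb i hi)))
  have hnonpos : ∑ i ∈ s, b i * InformationTheory.klFun (a i / b i) ≤ 0 := by
    rw [sum_congr rfl fun i hi => mul_klFun_div (hab i hi), sum_sub_distrib, sum_add_distrib]
    linarith
  have hzero := (sum_eq_zero_iff_of_nonneg hterm).1 (hnonpos.antisymm (sum_nonneg hterm))
  intro i hi
  rcases mul_eq_zero.1 (hzero i hi) with hbi | hkl
  · rw [hbi, hab i hi hbi]
  · exact eq_of_div_eq_one
      ((InformationTheory.klFun_eq_zero_iff (div_nonneg (ha i hi) (hb i hi))).1 hkl)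

end Gibbs

section Marginals

lemma sum_margY [Fintype Q] [Fintype Y] (p : Q × Y → ℝ) : ∑ y, margY p y = ∑ a, p a :=
  (Fintype.sum_prod_type_right p).symm

variable {Q Y X : Type*} [DecidableEq X]

lemma ind_self (p : Q × Y → ℝ) (f : Y → X) (q : Q) (y : Y) : ind p f (q, f y, y) = p (q, y) :=
  if_pos rfl

lemma ind_of_ne {p : Q × Y → ℝ} {f : Y → X} {q : Q} {x : X} {y : Y} (h : x ≠ f y) :
    ind p f (q, x, y) = 0 :=
  if_neg h

lemma ind_nonneg {p : Q × Y → ℝ} (hp : ∀ a, 0 ≤ p a) (f : Y → X) (a : Q × X × Y) :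
    0 ≤ ind p f a := by
  unfold ind
  split_ifs
  exacts [hp _, le_rfl]

lemma indXY_self [Fintype Q] (p : Q × Y → ℝ) (f : Y → X) (y : Y) :
    indXY p f (f y) y = margY p y :=
  sum_congr rfl fun q _ => ind_self p f q y

lemma le_margY [Fintype Q] {p : Q × Y → ℝ} (hp : ∀ a, 0 ≤ p a) (q : Q) (y : Y) :
    p (q, y) ≤ margY p y :=
  single_le_sum (f := fun q => p (q, y)) (fun _ _ => hp _) (mem_univ q)

lemma margY_nonneg [Fintype Q] {p : Q × Y → ℝ} (hp : ∀ a, 0 ≤ p a) (y : Y) : 0 ≤ margY p y :=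
  sum_nonneg fun _ _ => hp _

variable [Fintype Y]

lemma indQX_nonneg {p : Q × Y → ℝ} (hp : ∀ a, 0 ≤ p a) (f : Y → X) (q : Q) (x : X) :
    0 ≤ indQX p f q x :=
  sum_nonneg fun _ _ => ind_nonneg hp f _

lemma le_indQX {p : Q × Y → ℝ} (hp : ∀ a, 0 ≤ p a) (f : Y → X) (q : Q) (y : Y) :
    p (q, y) ≤ indQX p f q (f y) := by
  rw [← ind_self p f]
  exact single_le_sum (f := fun y' => ind p f (q, f y, y')) (fun _ _ => ind_nonneg hp f _)
    (mem_univ y)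

variable [Fintype Q]

lemma sum_indQX (p : Q × Y → ℝ) (f : Y → X) (x : X) : ∑ q, indQX p f q x = indX p f x :=
  rfl

lemma indX_nonneg {p : Q × Y → ℝ} (hp : ∀ a, 0 ≤ p a) (f : Y → X) (x : X) : 0 ≤ indX p f x :=
  sum_nonneg fun q _ => indQX_nonneg hp f q x

lemma indQX_le_indX {p : Q × Y → ℝ} (hp : ∀ a, 0 ≤ p a) (f : Y → X) (q : Q) (x : X) :
    indQX p f q x ≤ indX p f x :=
  single_le_sum (f := fun q => indQX p f q x) (fun _ _ => indQX_nonneg hp f _ x) (mem_univ q)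

end Marginals

section MarkovJoint

variable {Q Y X : Type*} [Fintype Q] [Fintype Y] [DecidableEq X]

/-- The joint pmf of `(Q, Y)` with the same `(Q, X)` and `(X, Y)` marginals as `p` under which
`Q`, `X = f(Y)`, `Y` is a Markov chain: `r(q, x) r(x, y) / r(x)` at `x = f y`. -/
noncomputable def markovJoint (p : Q × Y → ℝ) (f : Y → X) (a : Q × Y) : ℝ :=
  indQX p f a.1 (f a.2) * margY p a.2 / indX p f (f a.2)

lemma markovJoint_nonneg {p : Q × Y → ℝ} (hp : ∀ a, 0 ≤ p a) (f : Y → X) (a : Q × Y) :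
    0 ≤ markovJoint p f a :=
  div_nonneg (mul_nonneg (indQX_nonneg hp f _ _) (margY_nonneg hp _)) (indX_nonneg hp f _)

lemma eq_zero_of_markovJoint_eq_zero {p : Q × Y → ℝ} (hp : ∀ a, 0 ≤ p a) {f : Y → X} {a : Q × Y}
    (h : markovJoint p f a = 0) : p a = 0 := by
  refine le_antisymm ?_ (hp a)
  rcases div_eq_zero_iff.1 h with hmul | hX
  · rcases mul_eq_zero.1 hmul with hQX | hY
    · exact (le_indQX hp f _ _).trans_eq hQX
    · exact (le_margY hp _ _).trans_eq hY
  · exact ((le_indQX hp f _ _).trans (indQX_le_indX hp f _ _)).trans_eq hX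

lemma sum_markovJoint_le {p : Q × Y → ℝ} (hp : ∀ a, 0 ≤ p a) (f : Y → X) :
    ∑ a, markovJoint p f a ≤ ∑ a, p a := by
  rw [← sum_margY, Fintype.sum_prod_type_right]
  refine sum_le_sum fun y _ => ?_
  calc ∑ q, markovJoint p f (q, y)
      = margY p y * (indX p f (f y) / indX p f (f y)) := by
        simp only [markovJoint, ← sum_div, ← sum_mul, sum_indQX]
        ring
    _ ≤ margY p y := mul_le_of_le_one_right (margY_nonneg hp y) (div_self_le_one _)

variable [Fintype X]

theorem condMI_eq_sum_mul_log_div (p : Q × Y → ℝ) (f : Y → X) :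
    condMI p f = (∑ a, p a * log (p a / markovJoint p f a)) / log 2 := by
  rw [condMI, Fintype.sum_prod_type, sum_div]
  refine sum_congr rfl fun q _ => ?_
  rw [sum_comm, sum_div]
  refine sum_congr rfl fun y _ => ?_
  rw [Fintype.sum_eq_single (f y) fun x hx => by rw [ind_of_ne hx, zero_mul], ind_self, indXY_self,
    logb, markovJoint, div_div_eq_mul_div, ← mul_div_assoc]

theorem eq_markovJoint_of_condMI_eq_zero {p : Q × Y → ℝ} (hp : ∀ a, 0 ≤ p a) {f : Y → X}
    (h : condMI p f = 0) (a : Q × Y) : p a = markovJoint p f a := by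
  have hlog : ∑ a, p a * log (p a / markovJoint p f a) = 0 := by
    rw [condMI_eq_sum_mul_log_div] at h
    exact (div_eq_zero_iff.1 h).resolve_right (log_pos one_lt_two).ne'
  exact eq_of_sum_mul_log_div_nonpos (fun a _ => hp a) (fun a _ => markovJoint_nonneg hp f a)
    (fun _ _ => eq_zero_of_markovJoint_eq_zero hp) (sum_markovJoint_le hp f) hlog.le a (mem_univ a)

end MarkovJoint

section Posterior

variable {Q Y X : Type*} [Fintype Q]

/-- The conditional pmf of `Q` given `Y = y`; it is `0` when `y` has probability `0`. -/
noncomputable def posterior (p : Q × Y → ℝ) (y : Y) (q : Q) : ℝ :=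
  p (q, y) / margY p y

theorem ker_le_ker_posterior [Fintype Y] [Fintype X] [DecidableEq X] {p : Q × Y → ℝ}
    (hp : ∀ a, 0 ≤ p a) (hY : ∀ y, margY p y ≠ 0) {f : Y → X} (h : condMI p f = 0) :
    Setoid.ker f ≤ Setoid.ker (posterior p) := by
  have hpost (y : Y) : posterior p y = fun q => indQX p f q (f y) / indX p f (f y) := by
    funext q
    rw [posterior, eq_markovJoint_of_condMI_eq_zero hp h, markovJoint, mul_div_right_comm,
      mul_div_cancel_right₀ _ (hY y)]
  intro y y' (hf : f y = f y')
  change posterior p y = posterior p y'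
  rw [hpost, hpost, hf]

lemma eq_margQ_mul_margY_of_posterior_eq [Fintype Y] {p : Q × Y → ℝ} (hsum : ∑ a, p a = 1)
    (hY : ∀ y, margY p y ≠ 0) (hpost : ∀ y y', posterior p y = posterior p y') (q : Q) (y : Y) :
    p (q, y) = margQ p q * margY p y := by
  have hmul (y' : Y) : p (q, y') = posterior p y q * margY p y' := by
    rw [hpost y y', posterior, div_mul_cancel₀ _ (hY y')]
  have hmargQ : margQ p q = posterior p y q := by
    simp only [margQ, hmul, ← mul_sum, sum_margY, hsum, mul_one]
  rw [hmargQ, hmul]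

lemma miQY_eq_zero_of_eq_mul [Fintype Y] {p : Q × Y → ℝ}
    (h : ∀ q y, p (q, y) = margQ p q * margY p y) : miQY p = 0 := by
  refine sum_eq_zero fun q _ => sum_eq_zero fun y _ => ?_
  rw [← h]
  rcases eq_or_ne (p (q, y)) 0 with h0 | h0
  · rw [h0, zero_mul]
  · rw [div_self h0, logb_one, mul_zero]

end Posterior

lemma ker_fst_sup_ker_snd (α β : Type*) :
    Setoid.ker (Prod.fst : α × β → α) ⊔ Setoid.ker (Prod.snd : α × β → β) = ⊤ := by
  refine Setoid.eq_top_iff.2 fun a b => ?_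
  have hfst : Setoid.ker (Prod.fst : α × β → α) a (a.1, b.2) := rfl
  have hsnd : Setoid.ker (Prod.snd : α × β → β) (a.1, b.2) b := rfl
  exact Setoid.trans' _ (le_sup_left (a := Setoid.ker _) hfst)
    (le_sup_right (b := Setoid.ker _) hsnd)

theorem stmt_15_general {Q Y X₁ X₂ : Type*} [Fintype Q] [Fintype Y]
    [Fintype X₁] [DecidableEq X₁] [Fintype X₂] [DecidableEq X₂]
    {p : Q × Y → ℝ} (hp : ∀ a, 0 ≤ p a) (hsum : ∑ a, p a = 1) (hY : ∀ y, margY p y ≠ 0)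
    {f : Y → X₁} {g : Y → X₂} (hfg : Setoid.ker f ⊔ Setoid.ker g = ⊤)
    (hf : condMI p f = 0) (hg : condMI p g = 0) : miQY p = 0 := by
  have hker : Setoid.ker (posterior p) = ⊤ :=
    top_le_iff.1 (hfg ▸ sup_le (ker_le_ker_posterior hp hY hf) (ker_le_ker_posterior hp hY hg))
  exact miQY_eq_zero_of_eq_mul
    (eq_margQ_mul_margY_of_posterior_eq hsum hY fun y y' => Setoid.eq_top_iff.1 hker y y')

theorem stmt_15 {Q : Type*} [Fintype Q]
    (p : Q × (Fin 2 × Fin 2) → ℝ)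
    (hnn : ∀ a, 0 ≤ p a)
    (hmargY : ∀ y, margY p y = 1 / 4)
    (h1 : condMI p (Prod.fst : Fin 2 × Fin 2 → Fin 2) = 0)
    (h2 : condMI p (Prod.snd : Fin 2 × Fin 2 → Fin 2) = 0) :
    miQY p = 0 := by
  have hsum : ∑ a, p a = 1 := by norm_num [← sum_margY, hmargY]
  exact stmt_15_general hnn hsum (by simp [hmargY]) (ker_fst_sup_ker_snd _ _) h1 h2
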